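/- For every integer n ≥ 1, every terminal state T reachable from ₀(n) by Bergman moves, and every index i with T i = 1, one has (i : ℝ) ≥ −log_φ n − 2; that is, the leftmost chip of the final state of any complete Bergman game on ₀(n) lies at an index at least −log_φ n − 2. -/

import Mathlib

noncomputable section

/-- The golden ratio. -/
def phi : ℝ := (1 + Real.sqrt 5) / 2

/-- Base-φ logarithm. -/
def logphi (x : ℝ) : ℝ := Real.logb phi x

/-- A Bergman state: a finitely supported function from ℤ to ℕ. -/
abbrev BState := ℤ →₀ ℕ

/-- A split move at index `i`. -/
def SplitAt (S S' : BState) (i : ℤ) : Prop :=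
  2 ≤ S i ∧
    S' = S - Finsupp.single i 2 + Finsupp.single (i + 1) 1 + Finsupp.single (i - 2) 1

/-- A combine move at index `i`. -/
def CombineAt (S S' : BState) (i : ℤ) : Prop :=
  1 ≤ S i ∧ 1 ≤ S (i + 1) ∧
    S' = S - Finsupp.single i 1 - Finsupp.single (i + 1) 1 + Finsupp.single (i + 2) 1

/-- A move is a split or a combine. -/
def Move (S S' : BState) : Prop := (∃ i, SplitAt S S' i) ∨ (∃ i, CombineAt S S' i)

/-- Terminal state: no move is legal. -/
def Terminal (S : BState) : Prop :=
  (∀ i, S i ≤ 1) ∧ ∀ i, ¬(1 ≤ S i ∧ 1 ≤ S (i + 1))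

/-- A Bergman game of length `m` from `S`. -/
def Game (S : BState) (m : ℕ) (g : ℕ → BState) : Prop :=
  g 0 = S ∧ ∀ j < m, Move (g j) (g (j + 1))

/-- A complete Bergman game of length `m` from `S`. -/
def CompleteGame (S : BState) (m : ℕ) (g : ℕ → BState) : Prop :=
  Game S m g ∧ Terminal (g m)

/-- Reachability by a finite sequence of moves. -/
def Reachable : BState → BState → Prop := Relation.ReflTransGen Move

/-- Reachability by split moves only. -/
def SplitReachable : BState → BState → Prop :=
  Relation.ReflTransGen fun S S' => ∃ i, SplitAt S S' i

/-- The initial state `₀(n)`: `n` chips at index 0. -/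
def initState (n : ℕ) : BState := Finsupp.single 0 n

/-- Total number of chips in a state. -/
def chips (S : BState) : ℕ := S.sum fun _ c => c

open Classical in
/-- The number of split moves among the first `m` steps of `g`. -/
def splitCount (g : ℕ → BState) (m : ℕ) : ℕ :=
  ((Finset.range m).filter fun j => ∃ i, SplitAt (g j) (g (j + 1)) i).card

open Classical in
/-- The number of combine moves among the first `m` steps of `g`. -/
def combineCount (g : ℕ → BState) (m : ℕ) : ℕ :=
  ((Finset.range m).filter fun j => ∃ i, CombineAt (g j) (g (j + 1)) i).card

/-!
Both moves preserve `∑ j, S j * x ^ j` for every root `x` of `x ^ 2 = x + 1`. To control the left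
end of a state, evaluate at the conjugate root `ψ = -φ⁻¹`, whose powers grow to the left. In a
terminal state the chips have gaps of at least two, so if the leftmost chip is at `b`, then the
others contribute at most `∑ k ≥ 1, |ψ| ^ (b + 2 * k) = |ψ| ^ (b + 1)` in absolute value. The
leftmost chip therefore dominates, and `|ψ| ^ (b + 2) = |ψ| ^ b - |ψ| ^ (b + 1)` is at most the
absolute value of the invariant, which is `n` for the initial state.
-/

section Evaluation

variable {K : Type*} [Field K]

/-- The value `∑ j, S j * x ^ j` of a state when a chip at index `j` is worth `x ^ j`, as an
additive map. It is the invariant of the game for `x ^ 2 = x + 1`; `x = φ` gives the number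
represented by the state, and `x = ψ` its algebraic conjugate. -/
def stateValue (x : K) : BState →+ K :=
  Finsupp.liftAddHom fun j => (AddMonoidHom.mulRight (x ^ j)).comp (Nat.castAddMonoidHom K)

lemma stateValue_apply (x : K) (S : BState) :
    stateValue x S = ∑ j ∈ S.support, (S j : K) * x ^ j := rfl

lemma stateValue_single (x : K) (j : ℤ) (c : ℕ) :
    stateValue x (Finsupp.single j c) = c * x ^ j := by
  simp [stateValue]

lemma stateValue_initState (x : K) (n : ℕ) : stateValue x (initState n) = n := by
  simp [initState, stateValue_single]

lemma SplitAt.add_single_eq {S S' : BState} {i : ℤ} (h : SplitAt S S' i) :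
    S' + Finsupp.single i 2 = S + Finsupp.single (i + 1) 1 + Finsupp.single (i - 2) 1 := by
  obtain ⟨two_le, rfl⟩ := h
  rw [add_right_comm, add_right_comm _ _ (Finsupp.single i 2),
    tsub_add_cancel_of_le (Finsupp.single_le_iff.2 two_le)]

lemma CombineAt.add_single_eq {S S' : BState} {i : ℤ} (h : CombineAt S S' i) :
    S' + (Finsupp.single i 1 + Finsupp.single (i + 1) 1) = S + Finsupp.single (i + 2) 1 := by
  obtain ⟨one_le, one_le_succ, rfl⟩ := h
  have le : Finsupp.single i 1 + Finsupp.single (i + 1) 1 ≤ S := by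
    intro j
    by_cases hj : j = i <;> by_cases hj' : j = i + 1 <;> simp_all
  rw [tsub_tsub, add_right_comm, tsub_add_cancel_of_le le]

variable {x : K}

lemma ne_zero_of_sq_eq_add_one (hx : x ^ 2 = x + 1) : x ≠ 0 := by
  rintro rfl
  simp at hx

lemma zpow_add_two_of_sq_eq_add_one (hx : x ^ 2 = x + 1) (i : ℤ) :
    x ^ (i + 2) = x ^ (i + 1) + x ^ i := by
  have hx0 := ne_zero_of_sq_eq_add_one hx
  rw [zpow_add₀ hx0, zpow_add_one₀ hx0, zpow_ofNat, hx]
  ring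

lemma two_mul_zpow_of_sq_eq_add_one (hx : x ^ 2 = x + 1) (i : ℤ) :
    2 * x ^ i = x ^ (i + 1) + x ^ (i - 2) := by
  have h_succ := zpow_add_two_of_sq_eq_add_one hx (i - 1)
  have h_self := zpow_add_two_of_sq_eq_add_one hx (i - 2)
  rw [show i - 1 + 2 = i + 1 by ring, sub_add_cancel] at h_succ
  rw [sub_add_cancel, show i - 2 + 1 = i - 1 by ring] at h_self
  linear_combination h_self - h_succ

lemma Move.stateValue_eq (hx : x ^ 2 = x + 1) {S S' : BState} (h : Move S S') :
    stateValue x S' = stateValue x S := by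
  rcases h with ⟨i, h⟩ | ⟨i, h⟩
  · have heq := congrArg (stateValue x) h.add_single_eq
    simp only [map_add, stateValue_single, Nat.cast_ofNat, Nat.cast_one, one_mul] at heq
    linear_combination heq - two_mul_zpow_of_sq_eq_add_one hx i
  · have heq := congrArg (stateValue x) h.add_single_eq
    simp only [map_add, stateValue_single, Nat.cast_one, one_mul] at heq
    linear_combination heq + zpow_add_two_of_sq_eq_add_one hx i

lemma Reachable.stateValue_eq (hx : x ^ 2 = x + 1) {S T : BState} (h : Reachable S T) :
    stateValue x T = stateValue x S := by
  induction h with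
  | refl => rfl
  | tail _ hmove ih => rw [hmove.stateValue_eq hx, ih]

end Evaluation

section Sparse

/-- A set of integers without two consecutive elements, as is the set of occupied indices of a
terminal state. -/
def IsSparse (s : Finset ℤ) : Prop := ∀ j ∈ s, j + 1 ∉ s

variable {s t : Finset ℤ}

lemma IsSparse.mono (ht : IsSparse t) (hst : s ⊆ t) : IsSparse s :=
  fun j hj hj' => ht j (hst hj) (hst hj')

lemma IsSparse.add_two_le_of_lt (hs : IsSparse s) {j k : ℤ} (hj : j ∈ s) (hk : k ∈ s)
    (hjk : j < k) : j + 2 ≤ k := by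
  have hne : k ≠ j + 1 := fun h => hs j hj (h ▸ hk)
  lia

variable {K : Type*} [Field K] [LinearOrder K] [IsStrictOrderedRing K]

lemma zpow_add_one_add_zpow_add_two_le {r : K} (hr : 0 < r) (hr1 : r ^ 2 + r ≤ 1) (i : ℤ) :
    r ^ (i + 1) + r ^ (i + 2) ≤ r ^ i :=
  calc r ^ (i + 1) + r ^ (i + 2) = r ^ i * (r ^ 2 + r) := by
        rw [zpow_add_one₀ hr.ne', zpow_add₀ hr.ne', zpow_ofNat]; ring
    _ ≤ r ^ i := mul_le_of_le_one_right (zpow_pos hr i).le hr1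

lemma IsSparse.sum_zpow_le (hs : IsSparse s) {r : K} (hr : 0 < r) (hr1 : r ^ 2 + r ≤ 1) {a : ℤ}
    (ha : ∀ j ∈ s, a + 1 ≤ j) : ∑ j ∈ s, r ^ j ≤ r ^ a := by
  induction s using Finset.induction_on_min generalizing a with
  | empty => simpa using (zpow_pos hr a).le
  | insert b s hb ih =>
    have hbs : b ∉ s := fun h => (hb b h).false
    have htail : ∑ j ∈ s, r ^ j ≤ r ^ (b + 1) := by
      refine ih (hs.mono (Finset.subset_insert b s)) fun j hj => ?_
      have := hs.add_two_le_of_lt (Finset.mem_insert_self b s) (Finset.mem_insert_of_mem hj)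
        (hb j hj)
      lia
    have hab : a ≤ b - 1 := by linarith [ha b (Finset.mem_insert_self b s)]
    have hrec := zpow_add_one_add_zpow_add_two_le hr hr1 (b - 1)
    rw [sub_add_cancel, show b - 1 + 2 = b + 1 by ring] at hrec
    calc ∑ j ∈ insert b s, r ^ j = r ^ b + ∑ j ∈ s, r ^ j := Finset.sum_insert hbs
      _ ≤ r ^ b + r ^ (b + 1) := by gcongr
      _ ≤ r ^ (b - 1) := hrec
      _ ≤ r ^ a := zpow_le_zpow_right_of_le_one₀ hr (by linarith [sq_nonneg r]) hab

lemma IsSparse.abs_zpow_add_two_le_abs_sum (hs : IsSparse s) {x : K} (hx : x ≠ 0)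
    (hx1 : |x| ^ 2 + |x| ≤ 1) {i : ℤ} (hi : i ∈ s) :
    |x| ^ (i + 2) ≤ |∑ j ∈ s, x ^ j| := by
  have hr : 0 < |x| := abs_pos.2 hx
  obtain ⟨b, hb, hmin⟩ := s.exists_min_image id ⟨i, hi⟩
  have htail : |∑ j ∈ s.erase b, x ^ j| ≤ |x| ^ (b + 1) := by
    refine (Finset.abs_sum_le_sum_abs _ _).trans ?_
    simp only [abs_zpow]
    refine (hs.mono (s.erase_subset b)).sum_zpow_le hr hx1 fun j hj => ?_
    obtain ⟨hjb, hj⟩ := Finset.mem_erase.1 hj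
    linarith [hs.add_two_le_of_lt hb hj ((hmin j hj).lt_of_ne' hjb)]
  calc |x| ^ (i + 2) ≤ |x| ^ (b + 2) :=
        zpow_le_zpow_right_of_le_one₀ hr (by linarith [sq_nonneg |x|])
          (by gcongr; exact hmin i hi)
    _ ≤ |x| ^ b - |x| ^ (b + 1) := by linarith [zpow_add_one_add_zpow_add_two_le hr hx1 b]
    _ ≤ |x ^ b| - |∑ j ∈ s.erase b, x ^ j| := by rw [abs_zpow]; gcongr
    _ ≤ |x ^ b + ∑ j ∈ s.erase b, x ^ j| := abs_sub_abs_le_abs_add _ _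
    _ = |∑ j ∈ s, x ^ j| := by rw [Finset.add_sum_erase s _ hb]

end Sparse

section Terminal

variable {T : BState}

lemma Terminal.isSparse_support (hT : Terminal T) : IsSparse T.support := by
  intro j hj hj'
  rw [Finsupp.mem_support_iff, ← Nat.one_le_iff_ne_zero] at hj hj'
  exact hT.2 j ⟨hj, hj'⟩

lemma Terminal.stateValue_eq_sum {K : Type*} [Field K] (hT : Terminal T) (x : K) :
    stateValue x T = ∑ j ∈ T.support, x ^ j := by
  refine (stateValue_apply x T).trans (Finset.sum_congr rfl fun j hj => ?_)
  have hone : T j = 1 :=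
    (hT.1 j).antisymm (Nat.one_le_iff_ne_zero.2 (Finsupp.mem_support_iff.1 hj))
  rw [hone, Nat.cast_one, one_mul]

end Terminal

section GoldenRatio

open Real

lemma one_lt_phi : 1 < phi := one_lt_goldenRatio

lemma abs_goldenConj : |goldenConj| = phi⁻¹ :=
  (abs_of_neg goldenConj_neg).trans inv_goldenRatio.symm

lemma abs_goldenConj_sq_add_abs : |goldenConj| ^ 2 + |goldenConj| = 1 := by
  rw [sq_abs, goldenConj_sq, abs_of_neg goldenConj_neg]
  ring

lemma neg_logphi_le_of_abs_goldenConj_zpow_le {k : ℤ} {v : ℝ} (h : |goldenConj| ^ k ≤ v) :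
    -logphi v ≤ k := by
  have hv : 0 < v := (zpow_pos (abs_pos.2 goldenConj_ne_zero) k).trans_le h
  have hphi : phi ^ (-k) ≤ v := by rwa [zpow_neg, ← inv_zpow, ← abs_goldenConj]
  have hlog : ((-k : ℤ) : ℝ) ≤ logphi v := by
    rwa [logphi, le_logb_iff_rpow_le one_lt_phi hv, rpow_intCast]
  push_cast at hlog
  linarith

end GoldenRatio

theorem bergman_final_left_bound_general {S T : BState} (hT : Reachable S T) (hterm : Terminal T)
    {i : ℤ} (hi : i ∈ T.support) :
    -logphi |stateValue Real.goldenConj S| - 2 ≤ (i : ℝ) := by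
  have hvalue : |Real.goldenConj| ^ (i + 2) ≤ |stateValue Real.goldenConj S| := by
    rw [← hT.stateValue_eq Real.goldenConj_sq, hterm.stateValue_eq_sum]
    exact hterm.isSparse_support.abs_zpow_add_two_le_abs_sum Real.goldenConj_ne_zero
      abs_goldenConj_sq_add_abs.le hi
  have hlog := neg_logphi_le_of_abs_goldenConj_zpow_le hvalue
  push_cast at hlog
  linarith

/-- Every chip of a terminal state reachable from `₀(n)` lies at an index at least
`−log_φ n − 2`. -/
theorem bergman_final_left_bound (n : ℕ) (hn : 1 ≤ n)
    (T : BState) (hT : Reachable (initState n) T) (hterm : Terminal T)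
    (i : ℤ) (hi : T i = 1) :
    -logphi n - 2 ≤ (i : ℝ) := by
  simpa [stateValue_initState] using
    bergman_final_left_bound_general hT hterm (Finsupp.mem_support_iff.2 (by simp [hi]))
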